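/- arXiv:math/0702651 — 4 statements merged into one kernel-verified Lean document; each statement's English description precedes it below -/
import Mathlib

section
/- For all m ≥ 1 and n ≥ 2, there is a translation from m-variable intuitionistic propositional logic to n-variable intuitionistic propositional logic that is simultaneously consequence-respecting, tautology-respecting, and (∧,∨)-preserving. -/
/-!
The translation sends `⊥` to a fixed formula `a`, each variable `x_i` to `a ∨ ψ_{i+2}`, and commutes
with `⊤, ∧, ∨, →`. Every translated formula is implied by `a`, so the translation is a
homomorphism of Heyting algebras into the interval `[a, ⊤]`, and it preserves consequence
(`ipcTranslate_sound`).

For the converse, a Kripke model in the two variables `q, r` is used (`World`). Its upper part is the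
Rieger–Nishimura ladder `w_0, w_1, …`, where `w_k ≤ w_j` iff `j = k` or `j + 2 ≤ k`; `q` holds at `w_0`
only and `r` holds on the whole ladder. Formulas `χ_k` and `δ_k` in `q` define the sets `↑w_k` and
`{w_0, …, w_{k-1}}`, and `χ_{k+1}` defines the complement of `↓w_k`. Below each `w_j` hangs
a point `t_j` where `r` fails; these points form an infinite antichain, and
`ψ_i = (r → χ_i) → (r ∨ (r → χ_{i+1}))` fails, among ladder points and the `t_j`, exactly at `t_i`.
Hence `a = ψ_0 ∨ ψ_1` holds at all of these points.

Below all of this sits the canonical model of `m`-variable logic: its points are the prime theories `P`.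
Each `P` lies below the whole ladder, below `t_0` and `t_1`, and below `t_{i+2}` precisely when
`x_i ∉ P`. Seeing the whole ladder, `P` does not force `r → χ_i`, so `P` forces `ψ_i` iff
`P ≰ t_i`. Thus `P` refutes `a` and forces the translation of `x_i` iff `x_i ∈ P`, and by induction
`P` forces the translation of `φ` iff `φ ∈ P` (`forces_ipcTranslate`). A prime theory extending `Γ` and
omitting `φ` (`exists_primeTheory`) therefore shows that the translation of `φ` does not follow from
the translation of `Γ`.
-/

/-- Propositional formulas over a set `V` of variables, built from `∧, ∨, →, ⊥, ⊤`.
`¬φ` is the abbreviation `φ → ⊥`. -/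
inductive PropForm (V : Type) : Type
  | var : V → PropForm V
  | bot : PropForm V
  | top : PropForm V
  | and : PropForm V → PropForm V → PropForm V
  | or : PropForm V → PropForm V → PropForm V
  | imp : PropForm V → PropForm V → PropForm V

/-- A natural-deduction style consequence relation.  When the parameter `cl` is `False`
this is exactly the consequence relation `⊢` of intuitionistic propositional logic;
when `cl` is `True` the rule of excluded middle becomes available and it is the
consequence relation `⊢_C` of classical propositional logic. -/
inductive Prov {V : Type} (cl : Prop) : Set (PropForm V) → PropForm V → Prop
  | ax : ∀ {Γ : Set (PropForm V)} {φ}, φ ∈ Γ → Prov cl Γ φ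
  | topI : ∀ {Γ}, Prov cl Γ .top
  | botE : ∀ {Γ φ}, Prov cl Γ .bot → Prov cl Γ φ
  | andI : ∀ {Γ φ ψ}, Prov cl Γ φ → Prov cl Γ ψ → Prov cl Γ (.and φ ψ)
  | andE1 : ∀ {Γ φ ψ}, Prov cl Γ (.and φ ψ) → Prov cl Γ φ
  | andE2 : ∀ {Γ φ ψ}, Prov cl Γ (.and φ ψ) → Prov cl Γ ψ
  | orI1 : ∀ {Γ φ ψ}, Prov cl Γ φ → Prov cl Γ (.or φ ψ)
  | orI2 : ∀ {Γ φ ψ}, Prov cl Γ ψ → Prov cl Γ (.or φ ψ)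
  | orE : ∀ {Γ φ ψ χ}, Prov cl Γ (.or φ ψ) → Prov cl (insert φ Γ) χ →
      Prov cl (insert ψ Γ) χ → Prov cl Γ χ
  | impI : ∀ {Γ φ ψ}, Prov cl (insert φ Γ) ψ → Prov cl Γ (.imp φ ψ)
  | impE : ∀ {Γ φ ψ}, Prov cl Γ (.imp φ ψ) → Prov cl Γ φ → Prov cl Γ ψ
  | em : ∀ {Γ φ}, cl → Prov cl Γ (.or φ (.imp φ .bot))

/-- Intuitionistic consequence `Γ ⊢ φ`. -/
abbrev IProv {V : Type} (Γ : Set (PropForm V)) (φ : PropForm V) : Prop := Prov False Γ φ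

/-- Classical consequence `Γ ⊢_C φ`. -/
abbrev CProv {V : Type} (Γ : Set (PropForm V)) (φ : PropForm V) : Prop := Prov True Γ φ

theorem Prov.mono {V : Type} {cl : Prop} {Γ : Set (PropForm V)} {φ : PropForm V}
    (h : Prov cl Γ φ) : ∀ {Δ : Set (PropForm V)}, Γ ⊆ Δ → Prov cl Δ φ := by
  induction h with
  | ax hmem => intro Δ hsub; exact Prov.ax (hsub hmem)
  | topI => intro Δ _; exact Prov.topI
  | botE _ ih => intro Δ hsub; exact Prov.botE (ih hsub)
  | andI _ _ ih1 ih2 => intro Δ hsub; exact Prov.andI (ih1 hsub) (ih2 hsub)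
  | andE1 _ ih => intro Δ hsub; exact Prov.andE1 (ih hsub)
  | andE2 _ ih => intro Δ hsub; exact Prov.andE2 (ih hsub)
  | orI1 _ ih => intro Δ hsub; exact Prov.orI1 (ih hsub)
  | orI2 _ ih => intro Δ hsub; exact Prov.orI2 (ih hsub)
  | orE _ _ _ ih1 ih2 ih3 =>
      intro Δ hsub
      exact Prov.orE (ih1 hsub) (ih2 (Set.insert_subset_insert hsub))
        (ih3 (Set.insert_subset_insert hsub))
  | impI _ ih => intro Δ hsub; exact Prov.impI (ih (Set.insert_subset_insert hsub))
  | impE _ _ ih1 ih2 => intro Δ hsub; exact Prov.impE (ih1 hsub) (ih2 hsub)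
  | em hcl => intro Δ _; exact Prov.em hcl

theorem Prov.cut {V : Type} {cl : Prop} {Γ : Set (PropForm V)} {φ ψ : PropForm V}
    (h1 : Prov cl Γ φ) (h2 : Prov cl (insert φ Γ) ψ) : Prov cl Γ ψ :=
  Prov.impE (Prov.impI h2) h1

/-- Single-premise consequence: `φ ⊢ ψ` (intuitionistic when `cl = False`). -/
def Entails {V : Type} (cl : Prop) (φ ψ : PropForm V) : Prop := Prov cl {φ} ψ

theorem Entails.refl {V : Type} {cl : Prop} (φ : PropForm V) : Entails cl φ φ := Prov.ax rfl

theorem Entails.trans' {V : Type} {cl : Prop} {φ ψ χ : PropForm V}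
    (h1 : Entails cl φ ψ) (h2 : Entails cl ψ χ) : Entails cl φ χ :=
  Prov.cut h1 (h2.mono (Set.singleton_subset_iff.mpr (Set.mem_insert _ _)))

theorem Entails.and_congr {V : Type} {cl : Prop} {a b c d : PropForm V}
    (h1 : Entails cl a b) (h2 : Entails cl c d) :
    Entails cl (PropForm.and a c) (PropForm.and b d) := by
  have ha : Prov cl ({PropForm.and a c} : Set (PropForm V)) a := Prov.andE1 (Prov.ax rfl)
  have hc : Prov cl ({PropForm.and a c} : Set (PropForm V)) c := Prov.andE2 (Prov.ax rfl)
  exact Prov.andI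
    (Prov.cut ha (h1.mono (Set.singleton_subset_iff.mpr (Set.mem_insert _ _))))
    (Prov.cut hc (h2.mono (Set.singleton_subset_iff.mpr (Set.mem_insert _ _))))

theorem Entails.or_congr {V : Type} {cl : Prop} {a b c d : PropForm V}
    (h1 : Entails cl a b) (h2 : Entails cl c d) :
    Entails cl (PropForm.or a c) (PropForm.or b d) :=
  Prov.orE (Prov.ax rfl)
    (Prov.orI1 (h1.mono (Set.singleton_subset_iff.mpr (Set.mem_insert _ _))))
    (Prov.orI2 (h2.mono (Set.singleton_subset_iff.mpr (Set.mem_insert _ _))))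

/-- Logical equivalence (intuitionistic when `cl = False`, classical when `cl = True`). -/
def provSetoid (cl : Prop) (V : Type) : Setoid (PropForm V) where
  r φ ψ := Entails cl φ ψ ∧ Entails cl ψ φ
  iseqv := ⟨fun φ => ⟨Entails.refl φ, Entails.refl φ⟩, fun h => ⟨h.2, h.1⟩,
    fun h1 h2 => ⟨h1.1.trans' h2.1, h2.2.trans' h1.2⟩⟩

/-- The Lindenbaum algebra of formulas over `V` modulo logical equivalence.
`Lindenbaum False (Fin n)` is the free Heyting algebra `H_n`,
`Lindenbaum False ℕ` is `H_ω`, and `Lindenbaum True ℕ` is the free Boolean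
algebra `B_ω`. -/
def Lindenbaum (cl : Prop) (V : Type) : Type := Quotient (provSetoid cl V)

/-- The equivalence class of a formula. -/
def Lindenbaum.mk (cl : Prop) {V : Type} (φ : PropForm V) : Lindenbaum cl V :=
  Quotient.mk (provSetoid cl V) φ

/-- The order of the Lindenbaum algebra: `[φ] ≤ [ψ]` iff `φ ⊢ ψ`. -/
def Lindenbaum.le {cl : Prop} {V : Type} : Lindenbaum cl V → Lindenbaum cl V → Prop :=
  Quotient.lift₂ (Entails cl) (by
    intro a b a' b' ha hb
    obtain ⟨ha1, ha2⟩ := ha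
    obtain ⟨hb1, hb2⟩ := hb
    exact propext ⟨fun h => (ha2.trans' h).trans' hb1, fun h => (ha1.trans' h).trans' hb2⟩)

/-- The meet `∧` of the Lindenbaum algebra. -/
def Lindenbaum.inf {cl : Prop} {V : Type} :
    Lindenbaum cl V → Lindenbaum cl V → Lindenbaum cl V :=
  Quotient.map₂ PropForm.and (by
    intro a a' ha b b' hb
    obtain ⟨ha1, ha2⟩ := ha
    obtain ⟨hb1, hb2⟩ := hb
    exact ⟨ha1.and_congr hb1, ha2.and_congr hb2⟩)

/-- The join `∨` of the Lindenbaum algebra. -/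
def Lindenbaum.sup {cl : Prop} {V : Type} :
    Lindenbaum cl V → Lindenbaum cl V → Lindenbaum cl V :=
  Quotient.map₂ PropForm.or (by
    intro a a' ha b b' hb
    obtain ⟨ha1, ha2⟩ := ha
    obtain ⟨hb1, hb2⟩ := hb
    exact ⟨ha1.or_congr hb1, ha2.or_congr hb2⟩)

/-! ### Kripke semantics -/

/-- Kripke forcing over a preordered set of worlds. -/
def Forces {W V : Type} [Preorder W] (val : W → V → Prop) : W → PropForm V → Prop
  | w, .var v => val w v
  | _, .bot => False
  | _, .top => True
  | w, .and φ ψ => Forces val w φ ∧ Forces val w ψ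
  | w, .or φ ψ => Forces val w φ ∨ Forces val w ψ
  | w, .imp φ ψ => ∀ u, w ≤ u → Forces val u φ → Forces val u ψ

theorem Forces.mono {W V : Type} [Preorder W] {val : W → V → Prop}
    (hval : ∀ w u v, w ≤ u → val w v → val u v) (φ : PropForm V) :
    ∀ {w u : W}, w ≤ u → Forces val w φ → Forces val u φ := by
  induction φ with
  | var v => exact fun h hw => hval _ _ _ h hw
  | bot => exact fun _ hw => hw
  | top => exact fun _ hw => hw
  | and φ ψ ih1 ih2 => exact fun h hw => ⟨ih1 h hw.1, ih2 h hw.2⟩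
  | or φ ψ ih1 ih2 => exact fun h hw => hw.imp (ih1 h) (ih2 h)
  | imp φ ψ _ _ => exact fun h hw x hx => hw x (h.trans hx)

theorem Forces.sound {W V : Type} [Preorder W] {val : W → V → Prop}
    (hval : ∀ w u v, w ≤ u → val w v → val u v) {Γ : Set (PropForm V)} {φ : PropForm V}
    (h : IProv Γ φ) : ∀ w : W, (∀ γ ∈ Γ, Forces val w γ) → Forces val w φ := by
  induction h with
  | ax hm => exact fun w hw => hw _ hm
  | topI => exact fun w _ => trivial
  | botE _ ih => exact fun w hw => (ih w hw).elim
  | andI _ _ ih1 ih2 => exact fun w hw => ⟨ih1 w hw, ih2 w hw⟩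
  | andE1 _ ih => exact fun w hw => (ih w hw).1
  | andE2 _ ih => exact fun w hw => (ih w hw).2
  | orI1 _ ih => exact fun w hw => Or.inl (ih w hw)
  | orI2 _ ih => exact fun w hw => Or.inr (ih w hw)
  | orE _ _ _ ih ih1 ih2 =>
      intro w hw
      rcases ih w hw with h | h
      · exact ih1 w (Set.forall_mem_insert.mpr ⟨h, hw⟩)
      · exact ih2 w (Set.forall_mem_insert.mpr ⟨h, hw⟩)
  | impI _ ih =>
      exact fun w hw u hu hφ =>
        ih u (Set.forall_mem_insert.mpr ⟨hφ, fun γ hγ => Forces.mono hval γ hu (hw γ hγ)⟩)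
  | impE _ _ ih1 ih2 => exact fun w hw => ih1 w hw w le_rfl (ih2 w hw)
  | em h => exact h.elim

/-! ### Prime theories -/

theorem IProv.compact {V : Type} {Γ : Set (PropForm V)} {φ : PropForm V} (h : IProv Γ φ) :
    ∃ Δ : Set (PropForm V), Δ.Finite ∧ Δ ⊆ Γ ∧ IProv Δ φ := by
  -- Isolates the discharged premise `α` in the rules that change the context.
  have key : ∀ {Γ Δ : Set (PropForm V)} {α χ : PropForm V}, Δ.Finite → Δ ⊆ insert α Γ →
      IProv Δ χ → ∃ Δ' : Set (PropForm V), Δ'.Finite ∧ Δ' ⊆ Γ ∧ IProv (insert α Δ') χ := by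
    intro Γ Δ α χ hf hs hp
    refine ⟨Δ \ {α}, hf.sdiff, ?_, hp.mono ?_⟩
    · rintro x ⟨hx, hxa⟩
      exact (hs hx).resolve_left hxa
    · intro x hx
      by_cases hxa : x = α
      · exact Or.inl hxa
      · exact Or.inr ⟨hx, hxa⟩
  induction h with
  | ax hm => exact ⟨{_}, Set.finite_singleton _, Set.singleton_subset_iff.mpr hm, Prov.ax rfl⟩
  | topI => exact ⟨∅, Set.finite_empty, Set.empty_subset _, Prov.topI⟩
  | botE _ ih => obtain ⟨Δ, hf, hs, hp⟩ := ih; exact ⟨Δ, hf, hs, hp.botE⟩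
  | andI _ _ ih1 ih2 =>
      obtain ⟨Δ, hf, hs, hp⟩ := ih1
      obtain ⟨Δ', hf', hs', hp'⟩ := ih2
      exact ⟨Δ ∪ Δ', hf.union hf', Set.union_subset hs hs',
        Prov.andI (hp.mono Set.subset_union_left) (hp'.mono Set.subset_union_right)⟩
  | andE1 _ ih => obtain ⟨Δ, hf, hs, hp⟩ := ih; exact ⟨Δ, hf, hs, hp.andE1⟩
  | andE2 _ ih => obtain ⟨Δ, hf, hs, hp⟩ := ih; exact ⟨Δ, hf, hs, hp.andE2⟩
  | orI1 _ ih => obtain ⟨Δ, hf, hs, hp⟩ := ih; exact ⟨Δ, hf, hs, hp.orI1⟩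
  | orI2 _ ih => obtain ⟨Δ, hf, hs, hp⟩ := ih; exact ⟨Δ, hf, hs, hp.orI2⟩
  | orE _ _ _ ih ih1 ih2 =>
      obtain ⟨Δ, hf, hs, hp⟩ := ih
      obtain ⟨_, hf1, hs1, hp1⟩ := ih1
      obtain ⟨_, hf2, hs2, hp2⟩ := ih2
      obtain ⟨Δ1, hf1, hs1, hp1⟩ := key hf1 hs1 hp1
      obtain ⟨Δ2, hf2, hs2, hp2⟩ := key hf2 hs2 hp2
      refine ⟨Δ ∪ (Δ1 ∪ Δ2), hf.union (hf1.union hf2),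
        Set.union_subset hs (Set.union_subset hs1 hs2),
        Prov.orE (hp.mono Set.subset_union_left)
          (hp1.mono (Set.insert_subset_insert ?_)) (hp2.mono (Set.insert_subset_insert ?_))⟩
      · exact fun x hx => Or.inr (Or.inl hx)
      · exact fun x hx => Or.inr (Or.inr hx)
  | impI _ ih =>
      obtain ⟨_, hf, hs, hp⟩ := ih
      obtain ⟨Δ, hf, hs, hp⟩ := key hf hs hp
      exact ⟨Δ, hf, hs, hp.impI⟩
  | impE _ _ ih1 ih2 =>
      obtain ⟨Δ, hf, hs, hp⟩ := ih1
      obtain ⟨Δ', hf', hs', hp'⟩ := ih2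
      exact ⟨Δ ∪ Δ', hf.union hf', Set.union_subset hs hs',
        Prov.impE (hp.mono Set.subset_union_left) (hp'.mono Set.subset_union_right)⟩
  | em h => exact h.elim

/-- A prime theory: a consistent, deductively closed set of formulas with the disjunction
property. These are the worlds of the canonical model. -/
structure PrimeTheory (V : Type) where
  /-- The formulas belonging to the theory. -/
  carrier : Set (PropForm V)
  closed : ∀ φ, IProv carrier φ → φ ∈ carrier
  consistent : PropForm.bot ∉ carrier
  prime : ∀ φ ψ, PropForm.or φ ψ ∈ carrier → φ ∈ carrier ∨ ψ ∈ carrier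

/-- Lindenbaum's lemma: a set maximal among those containing `Γ` and not proving `φ` is a prime
theory. -/
theorem exists_primeTheory {V : Type} {Γ : Set (PropForm V)} {φ : PropForm V} (h : ¬ IProv Γ φ) :
    ∃ P : PrimeTheory V, Γ ⊆ P.carrier ∧ φ ∉ P.carrier := by
  obtain ⟨Δ, hΓΔ, hmax⟩ := zorn_subset_nonempty {Δ : Set (PropForm V) | ¬ IProv Δ φ} (by
    intro c hc hchain hne
    refine ⟨⋃₀ c, ?_, fun s hs => Set.subset_sUnion_of_mem hs⟩
    intro hp
    obtain ⟨Δ, hf, hs, hp⟩ := IProv.compact hp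
    obtain ⟨s, hsc, hΔs⟩ := DirectedOn.exists_mem_subset_of_finite_of_subset_sUnion
      hne hchain.directedOn hf hs
    exact hc hsc (hp.mono hΔs)) Γ h
  have hΔ : ¬ IProv Δ φ := hmax.prop
  have hins : ∀ ψ, ψ ∉ Δ → IProv (insert ψ Δ) φ := by
    intro ψ hψ
    by_contra hn
    exact hψ (hmax.le_of_ge hn (Set.subset_insert ψ Δ) (Set.mem_insert ψ Δ))
  refine ⟨⟨Δ, ?_, fun hb => hΔ (Prov.ax hb).botE, ?_⟩, hΓΔ, fun hφ => hΔ (Prov.ax hφ)⟩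
  · intro ψ hψ
    by_contra hn
    exact hΔ (Prov.cut hψ (hins ψ hn))
  · intro α β hor
    by_contra! hn
    exact hΔ (Prov.orE (Prov.ax hor) (hins α hn.1) (hins β hn.2))

/-! ### The separating formulas and the translation -/

/-- The pair `(χ_k, δ_k)` of Rieger–Nishimura formulas in the variable `q`. On the ladder, `χ_k`
defines `↑w_k` and `δ_k` defines `{w_0, …, w_{k-1}}`. -/
def ladderForm {V : Type} (q : V) : ℕ → PropForm V × PropForm V
  | 0 => (.var q, .bot)
  | k + 1 => (.imp (ladderForm q k).1 (ladderForm q k).2,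
      .or (ladderForm q k).2 (ladderForm q k).1)

/-- The formula `ψ_i = (r → χ_i) → (r ∨ (r → χ_{i+1}))`, refuted exactly at the worlds below
`t_i`. -/
def sepForm {V : Type} (q r : V) (i : ℕ) : PropForm V :=
  .imp (.imp (.var r) (ladderForm q i).1)
    (.or (.var r) (.imp (.var r) (ladderForm q (i + 1)).1))

/-- The formula `a = ψ_0 ∨ ψ_1`, which plays the role of `⊥` in the image of the translation. -/
def baseForm {V : Type} (q r : V) : PropForm V := .or (sepForm q r 0) (sepForm q r 1)

/-- The translation: `⊥ ↦ a`, `x_i ↦ a ∨ ψ_{i+2}`, commuting with `⊤, ∧, ∨, →`. -/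
def ipcTranslate {m : ℕ} {V : Type} (q r : V) : PropForm (Fin m) → PropForm V
  | .var i => .or (baseForm q r) (sepForm q r (i.val + 2))
  | .bot => baseForm q r
  | .top => .top
  | .and φ ψ => .and (ipcTranslate q r φ) (ipcTranslate q r ψ)
  | .or φ ψ => .or (ipcTranslate q r φ) (ipcTranslate q r ψ)
  | .imp φ ψ => .imp (ipcTranslate q r φ) (ipcTranslate q r ψ)

theorem ipcTranslate_of_base {m : ℕ} {V : Type} (q r : V) (φ : PropForm (Fin m)) :
    ∀ {Γ : Set (PropForm V)}, IProv Γ (baseForm q r) → IProv Γ (ipcTranslate q r φ) := by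
  induction φ with
  | var i => exact fun h => h.orI1
  | bot => exact fun h => h
  | top => exact fun _ => Prov.topI
  | and φ ψ ih1 ih2 => exact fun h => Prov.andI (ih1 h) (ih2 h)
  | or φ ψ ih1 _ => exact fun h => (ih1 h).orI1
  | imp φ ψ _ ih2 => exact fun h => Prov.impI (ih2 (h.mono (Set.subset_insert _ _)))

theorem ipcTranslate_sound {m : ℕ} {V : Type} (q r : V) {Γ : Set (PropForm (Fin m))}
    {φ : PropForm (Fin m)} (h : IProv Γ φ) : IProv (ipcTranslate q r '' Γ) (ipcTranslate q r φ) := by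
  induction h with
  | ax hm => exact Prov.ax (Set.mem_image_of_mem _ hm)
  | topI => exact Prov.topI
  | botE _ ih => exact ipcTranslate_of_base q r _ ih
  | andI _ _ ih1 ih2 => exact Prov.andI ih1 ih2
  | andE1 _ ih => exact Prov.andE1 ih
  | andE2 _ ih => exact Prov.andE2 ih
  | orI1 _ ih => exact Prov.orI1 ih
  | orI2 _ ih => exact Prov.orI2 ih
  | orE _ _ _ ih ih1 ih2 =>
      rw [Set.image_insert_eq] at ih1 ih2
      exact Prov.orE ih ih1 ih2
  | impI _ ih =>
      rw [Set.image_insert_eq] at ih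
      exact Prov.impI ih
  | impE _ _ ih1 ih2 => exact Prov.impE ih1 ih2
  | em h => exact h.elim

/-! ### The separating Kripke model -/

/-- Worlds of the separating model: the ladder points `w_k`, the antichain points `t_j`, and the
prime theories of `m`-variable logic. -/
inductive World (m : ℕ) : Type
  | ladder : ℕ → World m
  | anti : ℕ → World m
  | theory : PrimeTheory (Fin m) → World m

/-- Accessibility: `t_j` sees the ladder points above `w_j`, and a prime theory sees the whole
ladder, the larger prime theories, and those `t_j` for which `j` is not `i + 2` with `x_i` in the
theory. -/
def World.Le {m : ℕ} : World m → World m → Prop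
  | .ladder j, .ladder k => k = j ∨ k + 2 ≤ j
  | .anti j, .ladder k => k = j ∨ k + 2 ≤ j
  | .anti i, .anti j => i = j
  | .theory _, .ladder _ => True
  | .theory P, .anti j => ∀ i : Fin m, i.val + 2 = j → PropForm.var i ∉ P.carrier
  | .theory P, .theory Q => P.carrier ⊆ Q.carrier
  | _, _ => False

instance (m : ℕ) : Preorder (World m) where
  le := World.Le
  le_refl w := by cases w <;> simp [World.Le]
  le_trans u v w huv hvw := by
    cases u <;> cases v <;> cases w <;> simp only [World.Le] at * <;> try omega
    · subst hvw
      exact huv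
    · exact fun i hi hP => hvw i hi (huv hP)
    · exact huv.trans hvw

/-- The valuation: `r` holds exactly on the ladder, `q` holds exactly at `w_0`, and no other
variable holds anywhere. -/
def World.val {m : ℕ} {V : Type} (q r : V) : World m → V → Prop
  | .ladder k, v => v = r ∨ (v = q ∧ k = 0)
  | _, _ => False

theorem World.val_mono {m : ℕ} {V : Type} (q r : V) (w u : World m) (v : V) (h : w ≤ u) :
    World.val q r w v → World.val q r u v := by
  change World.Le w u at h
  cases w <;> cases u <;> simp only [World.Le, World.val] at * <;> try tauto
  rintro (h' | ⟨h', h0⟩)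
  · exact Or.inl h'
  · exact Or.inr ⟨h', by omega⟩

section Model

variable {m : ℕ} {V : Type} {q r : V}

theorem forces_ladderForm (hqr : q ≠ r) (k : ℕ) : ∀ j : ℕ,
    (Forces (World.val q r) (World.ladder j : World m) (ladderForm q k).1 ↔ j = k ∨ j + 2 ≤ k) ∧
    (Forces (World.val q r) (World.ladder j : World m) (ladderForm q k).2 ↔ j < k) := by
  induction k with
  | zero => intro j; simp [ladderForm, Forces, World.val, hqr]
  | succ k ih =>
      intro j
      constructor
      · constructor
        · intro h
          by_contra hn
          -- Otherwise `w_j ≤ w_k`, and `w_k` forces `χ_k` but not `δ_k`.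
          have hle : (World.ladder j : World m) ≤ World.ladder k := by
            change k = j ∨ k + 2 ≤ j
            omega
          exact absurd ((ih k).2.mp (h _ hle ((ih k).1.mpr (Or.inl rfl)))) (lt_irrefl k)
        · intro h u hu hf
          rcases u with i | i | P
          · have hij : i = j ∨ i + 2 ≤ j := hu
            have := (ih i).1.mp hf
            exact (ih i).2.mpr (by omega)
          · exact False.elim hu
          · exact False.elim hu
      · change (_ ∨ _) ↔ _
        rw [(ih j).1, (ih j).2]
        omega

theorem ladder_forces_sepForm (i j : ℕ) :
    Forces (World.val q r) (World.ladder j : World m) (sepForm q r i) := by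
  intro u hu _
  rcases u with k | k | P
  · exact Or.inl (Or.inl rfl)
  · exact False.elim hu
  · exact False.elim hu

theorem anti_forces_sepForm (hqr : q ≠ r) (i j : ℕ) :
    Forces (World.val q r) (World.anti j : World m) (sepForm q r i) ↔ j ≠ i := by
  have hjj : (World.anti j : World m) ≤ World.ladder j := Or.inl rfl
  constructor
  · rintro h rfl
    have hpre : Forces (World.val q r) (World.anti j : World m)
        (.imp (.var r) (ladderForm q j).1) := by
      intro u hu hr
      rcases u with k | k | P
      · exact (forces_ladderForm hqr j k).1.mpr hu
      · exact False.elim hr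
      · exact False.elim hr
    rcases h _ le_rfl hpre with h | h
    · exact h
    · have := (forces_ladderForm hqr (j + 1) j).1.mp (h _ hjj (Or.inl rfl))
      omega
  · intro hne u hu hpre
    rcases u with k | k | P
    · exact Or.inl (Or.inl rfl)
    · obtain rfl : j = k := hu
      have h1 := (forces_ladderForm hqr i j).1.mp (hpre _ hjj (Or.inl rfl))
      refine Or.inr fun v hv hr => ?_
      rcases v with k | k | P
      · have hk : k = j ∨ k + 2 ≤ j := hv
        exact (forces_ladderForm hqr (i + 1) k).1.mpr (by omega)
      · exact False.elim hr
      · exact False.elim hr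
    · exact False.elim hu

theorem theory_forces_sepForm (hqr : q ≠ r) (i : ℕ) (P : PrimeTheory (Fin m)) :
    Forces (World.val q r) (World.theory P) (sepForm q r i) ↔
      ¬ (World.theory P ≤ World.anti i) := by
  constructor
  · intro h hle
    exact (anti_forces_sepForm (m := m) hqr i i).mp (Forces.mono (World.val_mono q r) _ hle h) rfl
  · intro hn u hu hpre
    rcases u with k | k | Q
    · exact Or.inl (Or.inl rfl)
    · have hki : k ≠ i := by
        rintro rfl
        exact hn hu
      exact (anti_forces_sepForm hqr i k).mpr hki _ le_rfl hpre
    · -- A prime theory sees `w_{i+1}`, where `r` holds and `χ_i` fails.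
      have hle : (World.theory Q : World m) ≤ World.ladder (i + 1) := trivial
      have := (forces_ladderForm hqr i (i + 1)).1.mp (hpre _ hle (Or.inl rfl))
      omega

theorem ladder_forces_baseForm (j : ℕ) :
    Forces (World.val q r) (World.ladder j : World m) (baseForm q r) :=
  Or.inl (ladder_forces_sepForm 0 j)

theorem anti_forces_baseForm (hqr : q ≠ r) (j : ℕ) :
    Forces (World.val q r) (World.anti j : World m) (baseForm q r) := by
  by_cases hj : j = 0
  · exact Or.inr ((anti_forces_sepForm hqr 1 j).mpr (by omega))
  · exact Or.inl ((anti_forces_sepForm hqr 0 j).mpr hj)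

theorem theory_not_forces_baseForm (hqr : q ≠ r) (P : PrimeTheory (Fin m)) :
    ¬ Forces (World.val q r) (World.theory P) (baseForm q r) := by
  rintro (h | h)
  · exact (theory_forces_sepForm hqr 0 P).mp h fun i hi => by omega
  · exact (theory_forces_sepForm hqr 1 P).mp h fun i hi => by omega

/-- Worlds forcing `a`, in particular all ladder points and all `t_j`, force every translated formula. -/
theorem forces_ipcTranslate_of_base {w : World m}
    (h : Forces (World.val q r) w (baseForm q r)) (φ : PropForm (Fin m)) :
    Forces (World.val q r) w (ipcTranslate q r φ) :=
  Forces.sound (World.val_mono q r) (ipcTranslate_of_base q r φ (Prov.ax (Set.mem_singleton _))) w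
    (by rintro γ rfl; exact h)

/-- Truth lemma: the prime theories carry the canonical model of the source logic, read through
the translation. -/
theorem forces_ipcTranslate (hqr : q ≠ r) (φ : PropForm (Fin m)) : ∀ P : PrimeTheory (Fin m),
    Forces (World.val q r) (World.theory P) (ipcTranslate q r φ) ↔ φ ∈ P.carrier := by
  induction φ with
  | var i =>
      intro P
      change (_ ∨ _) ↔ _
      rw [or_iff_right (theory_not_forces_baseForm hqr P), theory_forces_sepForm hqr]
      change ¬ (∀ i' : Fin m, i'.val + 2 = i.val + 2 → PropForm.var i' ∉ P.carrier) ↔ _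
      constructor
      · intro h
        by_contra hi
        refine h fun i' hi' => ?_
        obtain rfl : i' = i := Fin.ext (by omega)
        exact hi
      · exact fun hi h => h i rfl hi
  | bot => exact fun P => iff_of_false (theory_not_forces_baseForm hqr P) P.consistent
  | top => exact fun P => iff_of_true trivial (P.closed _ Prov.topI)
  | and φ ψ ih1 ih2 =>
      intro P
      change (_ ∧ _) ↔ _
      rw [ih1 P, ih2 P]
      exact ⟨fun h => P.closed _ (Prov.andI (Prov.ax h.1) (Prov.ax h.2)),
        fun h => ⟨P.closed _ (Prov.ax h).andE1, P.closed _ (Prov.ax h).andE2⟩⟩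
  | or φ ψ ih1 ih2 =>
      intro P
      change (_ ∨ _) ↔ _
      rw [ih1 P, ih2 P]
      exact ⟨fun h => P.closed _ (h.elim (fun h => (Prov.ax h).orI1) fun h => (Prov.ax h).orI2),
        P.prime φ ψ⟩
  | imp φ ψ ih1 ih2 =>
      intro P
      constructor
      · intro h
        by_contra hn
        have hnp : ¬ IProv (insert φ P.carrier) ψ := fun hp => hn (P.closed _ (Prov.impI hp))
        obtain ⟨Q, hPQ, hψ⟩ := exists_primeTheory hnp
        have hle : World.theory P ≤ World.theory Q := (Set.subset_insert _ _).trans hPQ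
        exact hψ ((ih2 Q).mp (h _ hle ((ih1 Q).mpr (hPQ (Set.mem_insert _ _)))))
      · intro h u hu hφ
        rcases u with k | k | Q
        · exact forces_ipcTranslate_of_base (ladder_forces_baseForm k) ψ
        · exact forces_ipcTranslate_of_base (anti_forces_baseForm hqr k) ψ
        · have hPQ : P.carrier ⊆ Q.carrier := hu
          exact (ih2 Q).mpr
            (Q.closed _ (Prov.impE (Prov.ax (hPQ h)) (Prov.ax ((ih1 Q).mp hφ))))

theorem ipcTranslate_iff (hqr : q ≠ r) (Γ : Set (PropForm (Fin m))) (φ : PropForm (Fin m)) :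
    IProv Γ φ ↔ IProv (ipcTranslate q r '' Γ) (ipcTranslate q r φ) := by
  refine ⟨ipcTranslate_sound q r, fun h => ?_⟩
  by_contra hn
  obtain ⟨P, hΓ, hφ⟩ := exists_primeTheory hn
  refine hφ ((forces_ipcTranslate hqr φ P).mp (Forces.sound (World.val_mono q r) h _ ?_))
  rintro _ ⟨γ, hγ, rfl⟩
  exact (forces_ipcTranslate hqr γ P).mpr (hΓ hγ)

end Model

/-- For `m ≥ 1` and `n ≥ 2` there is a translation from `m`-variable intuitionistic logic
to `n`-variable intuitionistic logic which is simultaneously consequence-respecting,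
tautology-respecting, and `(∧,∨)`-preserving. -/
theorem exists_fully_respecting_translation (m n : ℕ) (hm : 1 ≤ m) (hn : 2 ≤ n) :
    ∃ f : PropForm (Fin m) → PropForm (Fin n),
      (∀ Γ : Set (PropForm (Fin m)), Γ.Nonempty →
        ∀ φ : PropForm (Fin m), (IProv Γ φ ↔ IProv (f '' Γ) (f φ))) ∧
      (∀ φ : PropForm (Fin m), (IProv (∅ : Set (PropForm (Fin m))) φ ↔
        IProv (∅ : Set (PropForm (Fin n))) (f φ))) ∧
      (∀ φ ψ : PropForm (Fin m), f (PropForm.and φ ψ) = PropForm.and (f φ) (f ψ)) ∧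
      (∀ φ ψ : PropForm (Fin m), f (PropForm.or φ ψ) = PropForm.or (f φ) (f ψ)) := by
  have hqr : (⟨0, by omega⟩ : Fin n) ≠ ⟨1, by omega⟩ := by simp
  refine ⟨ipcTranslate ⟨0, by omega⟩ ⟨1, by omega⟩, fun Γ _ φ => ipcTranslate_iff hqr Γ φ, fun φ => ?_,
    fun _ _ => rfl, fun _ _ => rfl⟩
  simpa only [Set.image_empty] using ipcTranslate_iff hqr ∅ φ
end

section
/- If f : F_m → F_n is a consequence-respecting translation from m-variable to n-variable intuitionistic propositional logic, then the function f' : F_m → F_n defined by f'(φ) = f(⊤) → f(φ) is both consequence-respecting and tautology-respecting. -/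
/-- Simultaneous cut: premises may be replaced by any set that derives each of them. -/
theorem Prov.cut_set {V : Type} {cl : Prop} {Γ : Set (PropForm V)} {φ : PropForm V}
    (h : Prov cl Γ φ) : ∀ {Δ : Set (PropForm V)}, (∀ γ ∈ Γ, Prov cl Δ γ) → Prov cl Δ φ := by
  have lift : ∀ {Γ Δ : Set (PropForm V)} (χ : PropForm V), (∀ γ ∈ Γ, Prov cl Δ γ) →
      ∀ γ ∈ insert χ Γ, Prov cl (insert χ Δ) γ := by
    rintro Γ Δ χ hΔ γ (rfl | hγ)
    · exact Prov.ax (Set.mem_insert _ _)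
    · exact (hΔ γ hγ).mono (Set.subset_insert _ _)
  induction h with
  | ax hmem => intro Δ hΔ; exact hΔ _ hmem
  | topI => intro Δ _; exact Prov.topI
  | botE _ ih => intro Δ hΔ; exact Prov.botE (ih hΔ)
  | andI _ _ ih1 ih2 => intro Δ hΔ; exact Prov.andI (ih1 hΔ) (ih2 hΔ)
  | andE1 _ ih => intro Δ hΔ; exact Prov.andE1 (ih hΔ)
  | andE2 _ ih => intro Δ hΔ; exact Prov.andE2 (ih hΔ)
  | orI1 _ ih => intro Δ hΔ; exact Prov.orI1 (ih hΔ)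
  | orI2 _ ih => intro Δ hΔ; exact Prov.orI2 (ih hΔ)
  | orE _ _ _ ih1 ih2 ih3 =>
      intro Δ hΔ
      exact Prov.orE (ih1 hΔ) (ih2 (lift _ hΔ)) (ih3 (lift _ hΔ))
  | impI _ ih => intro Δ hΔ; exact Prov.impI (ih (lift _ hΔ))
  | impE _ _ ih1 ih2 => intro Δ hΔ; exact Prov.impE (ih1 hΔ) (ih2 hΔ)
  | em hcl => intro Δ _; exact Prov.em hcl

theorem Prov.imp_iff {V : Type} {cl : Prop} {Γ : Set (PropForm V)} {φ ψ : PropForm V} :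
    Prov cl Γ (.imp φ ψ) ↔ Prov cl (insert φ Γ) ψ :=
  ⟨fun h => Prov.impE (h.mono (Set.subset_insert _ _)) (Prov.ax (Set.mem_insert _ _)),
    Prov.impI⟩

theorem Prov.insert_top_iff {V : Type} {cl : Prop} {Γ : Set (PropForm V)} {φ : PropForm V} :
    Prov cl (insert .top Γ) φ ↔ Prov cl Γ φ :=
  ⟨fun h => Prov.cut Prov.topI h, fun h => h.mono (Set.subset_insert _ _)⟩

/-- In the presence of the premise `t`, relativizing the other premises to `t` changes nothing. -/
theorem Prov.insert_image_imp_iff {V : Type} {cl : Prop} {t φ : PropForm V}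
    {A : Set (PropForm V)} :
    Prov cl (insert t (PropForm.imp t '' A)) φ ↔ Prov cl (insert t A) φ := by
  constructor
  · intro h
    refine h.cut_set ?_
    rintro γ (rfl | ⟨a, ha, rfl⟩)
    · exact Prov.ax (Set.mem_insert _ _)
    · exact Prov.impI (Prov.ax (Set.mem_insert_of_mem _ (Set.mem_insert_of_mem _ ha)))
  · intro h
    refine h.cut_set ?_
    rintro γ (rfl | ha)
    · exact Prov.ax (Set.mem_insert _ _)
    · exact Prov.impE (Prov.ax (Set.mem_insert_of_mem _ (Set.mem_image_of_mem _ ha)))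
        (Prov.ax (Set.mem_insert _ _))

/-- If `f` is a consequence-respecting translation from `m`-variable to `n`-variable
intuitionistic logic, then `f' := fun φ => f ⊤ → f φ` is both consequence-respecting and
tautology-respecting. -/
theorem consequence_tautology_of_consequence (m n : ℕ)
    (f : PropForm (Fin m) → PropForm (Fin n))
    (hf : ∀ Γ : Set (PropForm (Fin m)), Γ.Nonempty →
      ∀ φ : PropForm (Fin m), (IProv Γ φ ↔ IProv (f '' Γ) (f φ))) :
    (∀ Γ : Set (PropForm (Fin m)), Γ.Nonempty →
      ∀ φ : PropForm (Fin m),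
        (IProv Γ φ ↔
          IProv ((fun φ => PropForm.imp (f PropForm.top) (f φ)) '' Γ)
            (PropForm.imp (f PropForm.top) (f φ)))) ∧
    (∀ φ : PropForm (Fin m), (IProv (∅ : Set (PropForm (Fin m))) φ ↔
      IProv (∅ : Set (PropForm (Fin n))) (PropForm.imp (f PropForm.top) (f φ)))) := by
  -- The equivalence holds without assuming that the premise set is nonempty.
  have key : ∀ (Γ : Set (PropForm (Fin m))) (φ : PropForm (Fin m)),
      IProv Γ φ ↔ IProv ((fun φ => PropForm.imp (f PropForm.top) (f φ)) '' Γ)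
        (PropForm.imp (f PropForm.top) (f φ)) := by
    intro Γ φ
    have himage : (fun φ => PropForm.imp (f PropForm.top) (f φ)) '' Γ =
        PropForm.imp (f PropForm.top) '' (f '' Γ) :=
      (Set.image_image (PropForm.imp (f PropForm.top)) f Γ).symm
    rw [himage, IProv, IProv, Prov.imp_iff, Prov.insert_image_imp_iff, ← Set.image_insert_eq,
      ← Prov.insert_top_iff]
    exact hf _ (Set.insert_nonempty _ _) φ
  refine ⟨fun Γ _ φ => key Γ φ, fun φ => ?_⟩
  simpa only [Set.image_empty] using key ∅ φ
end

section
/- For every n ≥ 1 and all φ ≤ ψ in H_n, the interval [φ,ψ] = {ρ ∈ H_n : φ ≤ ρ ≤ ψ} is not lattice-isomorphic to H_ω. (Every nontrivial interval of H_n contains an atom, while H_ω is atomless.) -/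
/-! ### The Heyting algebra structure and algebraic semantics -/

namespace Lindenbaum

variable {V : Type}

/-- The implication of the intuitionistic Lindenbaum algebra. -/
def imp : Lindenbaum False V → Lindenbaum False V → Lindenbaum False V :=
  Quotient.map₂ PropForm.imp (by
    intro a a' ha b b' hb
    have key : ∀ {a a' b b' : PropForm V}, Entails False a' a → Entails False b b' →
        Entails False (.imp a b) (.imp a' b') := fun h1 h2 =>
      Prov.impI <| Prov.cut
        (Prov.impE (Prov.ax (Set.mem_insert_of_mem _ rfl)) (h1.mono (by simp)))
        (h2.mono (by simp))
    exact ⟨key ha.2 hb.1, key ha.1 hb.2⟩)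

/-- The Lindenbaum algebra of intuitionistic logic is a Heyting algebra; its order, meet and
join are definitionally `Lindenbaum.le`, `Lindenbaum.inf` and `Lindenbaum.sup`. -/
instance instHeyting : HeytingAlgebra (Lindenbaum False V) where
  le := Lindenbaum.le
  inf := Lindenbaum.inf
  sup := Lindenbaum.sup
  top := mk False .top
  bot := mk False .bot
  himp := imp
  compl := fun a => imp a (mk False .bot)
  himp_bot _ := rfl
  le_refl a := Quotient.inductionOn a fun a => Entails.refl a
  le_trans a b c := Quotient.inductionOn₃ a b c fun _ _ _ => Entails.trans'
  le_antisymm a b := Quotient.inductionOn₂ a b fun _ _ h1 h2 => Quotient.sound ⟨h1, h2⟩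
  le_sup_left a b := Quotient.inductionOn₂ a b fun _ _ => Prov.orI1 (Prov.ax rfl)
  le_sup_right a b := Quotient.inductionOn₂ a b fun _ _ => Prov.orI2 (Prov.ax rfl)
  sup_le a b c := Quotient.inductionOn₃ a b c fun _ _ _ h1 h2 =>
    Prov.orE (Prov.ax rfl) (Prov.mono h1 (by simp)) (Prov.mono h2 (by simp))
  inf_le_left a b := Quotient.inductionOn₂ a b fun _ _ => Prov.andE1 (Prov.ax rfl)
  inf_le_right a b := Quotient.inductionOn₂ a b fun _ _ => Prov.andE2 (Prov.ax rfl)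
  le_inf a b c := Quotient.inductionOn₃ a b c fun _ _ _ h1 h2 => Prov.andI h1 h2
  le_top a := Quotient.inductionOn a fun _ => Prov.topI
  bot_le a := Quotient.inductionOn a fun _ => Prov.botE (Prov.ax rfl)
  le_himp_iff a b c := Quotient.inductionOn₃ a b c fun a b c => by
    constructor
    · intro h
      exact Prov.impE
        (Prov.cut (Prov.andE1 (Prov.ax rfl)) (Prov.mono (φ := .imp b c) h (by simp)))
        (Prov.andE2 (Prov.ax rfl))
    · intro h
      refine Prov.impI (Prov.cut (φ := .and a b)
        (Prov.andI (Prov.ax (Set.mem_insert_of_mem _ rfl)) (Prov.ax (Set.mem_insert _ _)))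
        (Prov.mono (φ := c) h (by simp)))

end Lindenbaum

namespace PropForm

variable {V : Type} {A : Type*} [HeytingAlgebra A]

/-- The value of a formula in a Heyting algebra under a valuation of its variables. -/
def eval (v : V → A) : PropForm V → A
  | var i => v i
  | bot => ⊥
  | top => ⊤
  | and a b => eval v a ⊓ eval v b
  | or a b => eval v a ⊔ eval v b
  | imp a b => eval v a ⇨ eval v b

/-- Algebraic soundness of intuitionistic logic. -/
theorem eval_sound (v : V → A) {Γ : Set (PropForm V)} {φ : PropForm V} (h : IProv Γ φ) :
    ∀ c : A, (∀ γ ∈ Γ, c ≤ eval v γ) → c ≤ eval v φ := by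
  have ins : ∀ {Γ : Set (PropForm V)} {φ : PropForm V} {c : A}, (∀ γ ∈ Γ, c ≤ eval v γ) →
      ∀ γ ∈ insert φ Γ, c ⊓ eval v φ ≤ eval v γ := by
    rintro Γ φ c hc γ (rfl | hγ)
    · exact inf_le_right
    · exact inf_le_left.trans (hc γ hγ)
  induction h with
  | ax hmem => exact fun c hc => hc _ hmem
  | topI => exact fun c _ => le_top
  | botE _ ih => exact fun c hc => (ih c hc).trans bot_le
  | andI _ _ ih1 ih2 => exact fun c hc => le_inf (ih1 c hc) (ih2 c hc)
  | andE1 _ ih => exact fun c hc => (ih c hc).trans inf_le_left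
  | andE2 _ ih => exact fun c hc => (ih c hc).trans inf_le_right
  | orI1 _ ih => exact fun c hc => (ih c hc).trans le_sup_left
  | orI2 _ ih => exact fun c hc => (ih c hc).trans le_sup_right
  | orE _ _ _ ih1 ih2 ih3 =>
    intro c hc
    calc c ≤ c ⊓ (_ ⊔ _) := le_inf le_rfl (ih1 c hc)
      _ = _ := inf_sup_left _ _ _
      _ ≤ _ := sup_le (ih2 _ (ins hc)) (ih3 _ (ins hc))
  | impI _ ih => exact fun c hc => le_himp_iff.2 (ih _ (ins hc))
  | impE _ _ ih1 ih2 =>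
    exact fun c hc => (le_inf (ih1 c hc) (ih2 c hc)).trans himp_inf_le
  | em hcl => exact hcl.elim

theorem eval_mono (v : V → A) {φ ψ : PropForm V} (h : Entails False φ ψ) :
    eval v φ ≤ eval v ψ :=
  eval_sound v h _ (by rintro γ rfl; exact le_rfl)

/-- Under the canonical valuation every formula evaluates to its own class. -/
theorem eval_mk (φ : PropForm V) :
    eval (fun i => Lindenbaum.mk False (var i)) φ = Lindenbaum.mk False φ := by
  induction φ with
  | var i => rfl
  | bot => rfl
  | top => rfl
  | and a b iha ihb => rw [eval, iha, ihb]; rfl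
  | or a b iha ihb => rw [eval, iha, ihb]; rfl
  | imp a b iha ihb => rw [eval, iha, ihb]; rfl

end PropForm

namespace Lindenbaum

variable {V : Type} {A : Type*} [HeytingAlgebra A]

/-- The homomorphism out of the Lindenbaum algebra induced by a valuation: the universal
property of the free Heyting algebra. -/
noncomputable def lift (v : V → A) : HeytingHom (Lindenbaum False V) A where
  toFun := Quotient.lift (PropForm.eval v) fun _ _ h =>
    le_antisymm (PropForm.eval_mono v h.1) (PropForm.eval_mono v h.2)
  map_sup' a b := Quotient.inductionOn₂ a b fun _ _ => rfl
  map_inf' a b := Quotient.inductionOn₂ a b fun _ _ => rfl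
  map_bot' := rfl
  map_himp' a b := Quotient.inductionOn₂ a b fun _ _ => rfl

theorem lift_mk (v : V → A) (φ : PropForm V) : lift v (mk False φ) = φ.eval v := rfl

/-! ### Atomlessness of `H_ω` -/

/-- Changing the value of one variable of large enough index leaves the value of `φ` unchanged. -/
theorem eval_update_eventually (φ : PropForm ℕ) (v : ℕ → A) :
    ∃ N, ∀ k ≥ N, ∀ c : A, φ.eval (Function.update v k c) = φ.eval v := by
  induction φ with
  | var i =>
    exact ⟨i + 1, fun k hk c => Function.update_of_ne (by omega) _ _⟩
  | bot => exact ⟨0, fun _ _ _ => rfl⟩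
  | top => exact ⟨0, fun _ _ _ => rfl⟩
  | and a b iha ihb | or a b iha ihb | imp a b iha ihb =>
    obtain ⟨N, hN⟩ := iha
    obtain ⟨M, hM⟩ := ihb
    refine ⟨max N M, fun k hk c => ?_⟩
    rw [PropForm.eval, PropForm.eval, hN k (le_trans (le_max_left _ _) hk),
      hM k (le_trans (le_max_right _ _) hk)]

/-- `H_ω` has no atoms: below `ρ ≠ ⊥` lies `ρ ⊓ x_k` for a fresh variable `x_k`. -/
theorem exists_between_bot (ρ : Lindenbaum False ℕ) (hρ : ρ ≠ ⊥) :
    ∃ σ, σ ≠ ⊥ ∧ σ < ρ := by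
  induction ρ using Quotient.inductionOn with | _ r => ?_
  change mk False r ≠ ⊥ at hρ
  change ∃ σ, σ ≠ ⊥ ∧ σ < mk False r
  let v : ℕ → Lindenbaum False ℕ := fun i => mk False (.var i)
  obtain ⟨k, hk⟩ := eval_update_eventually r v
  have hfix : ∀ c, lift (Function.update v k c) (mk False r) = mk False r := fun c => by
    rw [lift_mk, hk k le_rfl c, PropForm.eval_mk]
  have hx : ∀ c, lift (Function.update v k c) (mk False (.var k)) = c := fun c => by
    rw [lift_mk, PropForm.eval, Function.update_self]
  refine ⟨mk False r ⊓ mk False (.var k), fun h => hρ ?_, lt_of_le_of_ne inf_le_left fun h => hρ ?_⟩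
  · -- substitute `⊤` for the fresh variable
    have := congrArg (lift (Function.update v k ⊤)) h
    rwa [map_inf, hfix, hx, inf_top_eq, map_bot] at this
  · -- substitute `⊥` for the fresh variable
    have := congrArg (lift (Function.update v k ⊥)) h
    rw [map_inf, hfix, hx, inf_bot_eq] at this
    exact this.symm

theorem bot_ne_top_nat : (⊥ : Lindenbaum False ℕ) ≠ ⊤ := fun h => by
  have := congrArg (lift (A := Prop) fun _ => True) h
  rw [map_bot, map_top] at this
  exact bot_ne_top this

/-! ### The finite model property -/

/-- A finite bounded distributive lattice is a Heyting algebra, with the same order. -/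
noncomputable abbrev heytingOfFinite (D : Type*) [DistribLattice D] [BoundedOrder D] [Fintype D] :
    HeytingAlgebra D :=
  open Classical in
  { ‹DistribLattice D›, ‹BoundedOrder D› with
    himp := fun a b => (Finset.univ.filter fun x => x ⊓ a ≤ b).sup id
    compl := fun a => (Finset.univ.filter fun x => x ⊓ a ≤ ⊥).sup id
    himp_bot := fun _ => rfl
    le_himp_iff := fun a b c => by
      classical
      constructor
      · intro h
        refine (inf_le_inf_right b h).trans ?_
        rw [Finset.sup_inf_distrib_right]
        exact Finset.sup_le fun x hx => (Finset.mem_filter.1 hx).2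
      · intro h
        exact Finset.le_sup (f := id) (Finset.mem_filter.2 ⟨Finset.mem_univ _, h⟩) }

/-- The classes of all implications occurring as subformulas of a formula. -/
def impClasses : PropForm V → Set (Lindenbaum False V)
  | .var _ => ∅
  | .bot => ∅
  | .top => ∅
  | .and a b => impClasses a ∪ impClasses b
  | .or a b => impClasses a ∪ impClasses b
  | .imp a b => {mk False (.imp a b)} ∪ (impClasses a ∪ impClasses b)

theorem impClasses_finite (φ : PropForm V) : (impClasses φ).Finite := by
  induction φ with
  | var i => exact Set.finite_empty
  | bot => exact Set.finite_empty
  | top => exact Set.finite_empty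
  | and a b iha ihb => exact iha.union ihb
  | or a b iha ihb => exact iha.union ihb
  | imp a b iha ihb => exact (Set.finite_singleton _).union (iha.union ihb)

/-- Finite model property, after McKinsey and Tarski: a non-inequality of a finitely generated
free Heyting algebra is witnessed by a homomorphism to a finite Heyting algebra.
The target is the finite sublattice generated by the variables and the subformulas that are
implications; relative pseudocomplements that stay in the sublattice agree with its own. -/
theorem exists_finite_separating [Finite V] (p q : Lindenbaum False V) (h : ¬ p ≤ q) :
    ∃ (A : Type) (_ : HeytingAlgebra A) (_ : Finite A)
      (e : HeytingHom (Lindenbaum False V) A), ¬ e p ≤ e q := by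
  induction p using Quotient.inductionOn with | _ φ => ?_
  induction q using Quotient.inductionOn with | _ ψ => ?_
  change ¬ mk False φ ≤ mk False ψ at h
  let S : Set (Lindenbaum False V) :=
    {⊥, ⊤} ∪ Set.range (fun i : V => mk False (.var i)) ∪ (impClasses φ ∪ impClasses ψ)
  have hS : S.Finite := ((Set.toFinite _).union (Set.finite_range _)).union
    ((impClasses_finite φ).union (impClasses_finite ψ))
  have hsub : S ⊆ latticeClosure S := subset_latticeClosure
  let D : Sublattice (Lindenbaum False V) :=
    ⟨latticeClosure S, isSublattice_latticeClosure.1, isSublattice_latticeClosure.2⟩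
  have hfin : Finite D := hS.latticeClosure.to_subtype
  let _ : Fintype D := Fintype.ofFinite D
  let _ : BoundedOrder D :=
    { top := ⟨⊤, hsub (by simp [S])⟩
      bot := ⟨⊥, hsub (by simp [S])⟩
      le_top := fun a => show a.1 ≤ ⊤ from le_top
      bot_le := fun a => show ⊥ ≤ a.1 from bot_le }
  let _ : HeytingAlgebra D := heytingOfFinite D
  let v : V → D := fun i => ⟨mk False (.var i), hsub (.inl (.inr ⟨i, rfl⟩))⟩
  have key : ∀ χ : PropForm V, impClasses χ ⊆ latticeClosure S →
      ((χ.eval v : D) : Lindenbaum False V) = mk False χ := by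
    intro χ
    induction χ with
    | var i => exact fun _ => rfl
    | bot => exact fun _ => rfl
    | top => exact fun _ => rfl
    | and a b iha ihb =>
      intro hc
      change (a.eval v).1 ⊓ (b.eval v).1 = _
      rw [iha (Set.union_subset_iff.1 hc).1, ihb (Set.union_subset_iff.1 hc).2]
      rfl
    | or a b iha ihb =>
      intro hc
      change (a.eval v).1 ⊔ (b.eval v).1 = _
      rw [iha (Set.union_subset_iff.1 hc).1, ihb (Set.union_subset_iff.1 hc).2]
      rfl
    | imp a b iha ihb =>
      intro hc
      obtain ⟨h0, hab⟩ := Set.union_subset_iff.1 hc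
      have ha := iha (Set.union_subset_iff.1 hab).1
      have hb := ihb (Set.union_subset_iff.1 hab).2
      have hm : mk False (.imp a b) ∈ latticeClosure S := h0 rfl
      have himp : mk False (.imp a b) = mk False a ⇨ mk False b := rfl
      have : (a.eval v ⇨ b.eval v : D) = ⟨mk False (.imp a b), hm⟩ := by
        refine eq_of_forall_le_iff fun c => le_himp_iff.trans ?_
        change c.1 ⊓ (a.eval v).1 ≤ (b.eval v).1 ↔ c.1 ≤ mk False (.imp a b)
        rw [ha, hb, himp, le_himp_iff]
      exact congrArg Subtype.val this
  refine ⟨D, inferInstance, hfin, lift v, fun hle => h ?_⟩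
  have hle' : ((φ.eval v : D) : Lindenbaum False V) ≤ (ψ.eval v : D) := hle
  rwa [key φ ((Set.subset_union_left.trans Set.subset_union_right).trans hsub),
    key ψ ((Set.subset_union_right.trans Set.subset_union_right).trans hsub)] at hle'

/-! ### Finite intervals in `H_n` -/

/-- The kernel filter of a homomorphism from `H_n` to a finite Heyting algebra contains an
element `χ` such that `h ↦ h ⊓ χ` takes only finitely many values.  The element `χ` expresses
that chosen representatives of the image compose according to its operation tables. -/
theorem exists_kernel_generator [Finite V] {A : Type} [HeytingAlgebra A] [Finite A]
    (e : HeytingHom (Lindenbaum False V) A) :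
    ∃ χ, e χ = ⊤ ∧ (Set.range fun h : Lindenbaum False V => h ⊓ χ).Finite := by
  classical
  let t : A → Lindenbaum False V := Function.invFun e
  have ht : ∀ h, e (t (e h)) = e h := fun h => Function.invFun_eq ⟨h, rfl⟩
  let T : Set (Lindenbaum False V) := Set.range t
  have hT : T.Finite := Set.finite_range t
  -- the defining equations `g = t (e g)` are required for `g ∈ G`
  let G : Set (Lindenbaum False V) := {⊥, ⊤} ∪ Set.range (fun i : V => mk False (.var i)) ∪
    (Set.image2 (· ⊓ ·) T T ∪ (Set.image2 (· ⊔ ·) T T ∪ Set.image2 (· ⇨ ·) T T))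
  have hG : G.Finite := ((Set.toFinite _).union (Set.finite_range _)).union
    ((hT.image2 _ hT).union ((hT.image2 _ hT).union (hT.image2 _ hT)))
  let r : Lindenbaum False V → Lindenbaum False V := fun h => (h ⇨ t (e h)) ⊓ (t (e h) ⇨ h)
  let χ : Lindenbaum False V := hG.toFinset.inf r
  have hχG : ∀ g ∈ G, g ⊓ χ ≤ t (e g) ∧ t (e g) ⊓ χ ≤ g := fun g hg => by
    have h1 : χ ≤ r g := Finset.inf_le (hG.mem_toFinset.2 hg)
    exact ⟨inf_comm g χ ▸ le_himp_iff.1 (h1.trans inf_le_left),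
      inf_comm (t (e g)) χ ▸ le_himp_iff.1 (h1.trans inf_le_right)⟩
  have hχ : ∀ g ∈ G, g ⊓ χ = t (e g) ⊓ χ := fun g hg =>
    le_antisymm (le_inf (hχG g hg).1 inf_le_right) (le_inf (hχG g hg).2 inf_le_right)
  have himp : ∀ a b : Lindenbaum False V, (a ⇨ b) ⊓ χ = ((a ⊓ χ) ⇨ (b ⊓ χ)) ⊓ χ := by
    intro a b
    apply le_antisymm
    · refine le_inf (le_himp_iff.2 (le_inf ?_ ?_)) inf_le_right
      · calc (a ⇨ b) ⊓ χ ⊓ (a ⊓ χ) ≤ (a ⇨ b) ⊓ a := inf_le_inf inf_le_left inf_le_left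
          _ ≤ b := himp_inf_le
      · exact inf_le_left.trans inf_le_right
    · refine le_inf (le_himp_iff.2 ?_) inf_le_right
      calc ((a ⊓ χ) ⇨ (b ⊓ χ)) ⊓ χ ⊓ a = ((a ⊓ χ) ⇨ (b ⊓ χ)) ⊓ (a ⊓ χ) := by
            rw [inf_assoc, inf_comm χ a]
        _ ≤ b ⊓ χ := himp_inf_le
        _ ≤ b := inf_le_left
  have all : ∀ φ : PropForm V, mk False φ ⊓ χ = t (e (mk False φ)) ⊓ χ := by
    intro φ
    induction φ with
    | var i => exact hχ _ (.inl (.inr ⟨i, rfl⟩))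
    | bot => exact hχ _ (.inl (.inl (.inl rfl)))
    | top => exact hχ _ (.inl (.inl (.inr rfl)))
    | and a b iha ihb =>
      change (mk False a ⊓ mk False b) ⊓ χ = t (e (mk False a ⊓ mk False b)) ⊓ χ
      have hg := hχ (t (e (mk False a)) ⊓ t (e (mk False b)))
        (.inr (.inl ⟨_, ⟨_, rfl⟩, _, ⟨_, rfl⟩, rfl⟩))
      rw [map_inf, ht, ht, ← map_inf] at hg
      rw [← hg, inf_inf_distrib_right, iha, ihb, ← inf_inf_distrib_right]
    | or a b iha ihb =>
      change (mk False a ⊔ mk False b) ⊓ χ = t (e (mk False a ⊔ mk False b)) ⊓ χ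
      have hg := hχ (t (e (mk False a)) ⊔ t (e (mk False b)))
        (.inr (.inr (.inl ⟨_, ⟨_, rfl⟩, _, ⟨_, rfl⟩, rfl⟩)))
      rw [map_sup, ht, ht, ← map_sup] at hg
      rw [← hg, inf_sup_right, iha, ihb, ← inf_sup_right]
    | imp a b iha ihb =>
      change (mk False a ⇨ mk False b) ⊓ χ = t (e (mk False a ⇨ mk False b)) ⊓ χ
      have hg := hχ (t (e (mk False a)) ⇨ t (e (mk False b)))
        (.inr (.inr (.inr ⟨_, ⟨_, rfl⟩, _, ⟨_, rfl⟩, rfl⟩)))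
      rw [map_himp, ht, ht, ← map_himp] at hg
      rw [← hg, himp, iha, ihb, ← himp]
  refine ⟨χ, ?_, ?_⟩
  · have : e χ = hG.toFinset.inf (e ∘ r) := map_finset_inf e _ _
    rw [this]
    refine le_antisymm le_top (Finset.le_inf fun g _ => ?_)
    simp only [Function.comp, r, map_inf, map_himp, ht, himp_self, inf_idem, le_refl]
  · refine (hT.image (· ⊓ χ)).subset ?_
    rintro _ ⟨h, rfl⟩
    induction h using Quotient.inductionOn with | _ φ => ?_
    exact ⟨t (e (mk False φ)), ⟨_, rfl⟩, (all φ).symm⟩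

/-- Every nontrivial interval `[p, q]` of `H_n` has a nontrivial finite initial segment. -/
theorem exists_finite_Icc [Finite V] (p q : Lindenbaum False V) (h : p < q) :
    ∃ b, p < b ∧ b ≤ q ∧ (Set.Icc p b).Finite := by
  obtain ⟨A, _, _, e, he⟩ := exists_finite_separating q p h.not_ge
  obtain ⟨χ, hχ, hfin⟩ := exists_kernel_generator e
  refine ⟨p ⊔ q ⊓ χ, lt_of_le_of_ne le_sup_left fun heq => he ?_,
    sup_le h.le inf_le_left, ?_⟩
  · have h1 : q ⊓ χ ≤ p := heq ▸ le_sup_right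
    have h2 := OrderHomClass.mono e h1
    rwa [map_inf, hχ, inf_top_eq] at h2
  · -- an element of `[p, p ⊔ q ⊓ χ]` is recovered from its meet with `χ`
    refine (hfin.image (p ⊔ ·)).subset ?_
    rintro c ⟨hpc, hcb⟩
    refine ⟨c ⊓ χ, ⟨c, rfl⟩, le_antisymm (sup_le hpc inf_le_left) ?_⟩
    calc c ≤ c ⊓ (p ⊔ q ⊓ χ) := le_inf le_rfl hcb
      _ = c ⊓ p ⊔ c ⊓ (q ⊓ χ) := inf_sup_left _ _ _
      _ ≤ p ⊔ c ⊓ χ := sup_le_sup inf_le_right (inf_le_inf_left _ inf_le_right)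

end Lindenbaum

/-- For `n ≥ 1` and `φ ≤ ψ` in `H_n`, the interval `[φ, ψ]` is not lattice-isomorphic to
`H_ω`: there is no map which is a bijection from the interval onto `H_ω` preserving `∧`
and `∨` on the interval. -/
theorem interval_not_iso_Homega (n : ℕ) (hn : 1 ≤ n)
    (φ ψ : Lindenbaum False (Fin n)) (hle : Lindenbaum.le φ ψ) :
    ¬∃ f : Lindenbaum False (Fin n) → Lindenbaum False ℕ,
      Set.BijOn f {ρ : Lindenbaum False (Fin n) | Lindenbaum.le φ ρ ∧ Lindenbaum.le ρ ψ}
        (Set.univ : Set (Lindenbaum False ℕ)) ∧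
      (∀ a ∈ {ρ : Lindenbaum False (Fin n) | Lindenbaum.le φ ρ ∧ Lindenbaum.le ρ ψ},
        ∀ b ∈ {ρ : Lindenbaum False (Fin n) | Lindenbaum.le φ ρ ∧ Lindenbaum.le ρ ψ},
          f (Lindenbaum.inf a b) = Lindenbaum.inf (f a) (f b)) ∧
      (∀ a ∈ {ρ : Lindenbaum False (Fin n) | Lindenbaum.le φ ρ ∧ Lindenbaum.le ρ ψ},
        ∀ b ∈ {ρ : Lindenbaum False (Fin n) | Lindenbaum.le φ ρ ∧ Lindenbaum.le ρ ψ},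
          f (Lindenbaum.sup a b) = Lindenbaum.sup (f a) (f b)) := by
  rintro ⟨f, ⟨-, hinj, hsurj⟩, hinf, -⟩
  change φ ≤ ψ at hle
  change Set.InjOn f (Set.Icc φ ψ) at hinj
  change Set.SurjOn f (Set.Icc φ ψ) Set.univ at hsurj
  change ∀ a ∈ Set.Icc φ ψ, ∀ b ∈ Set.Icc φ ψ, f (a ⊓ b) = f a ⊓ f b at hinf
  have hφ : φ ∈ Set.Icc φ ψ := ⟨le_rfl, hle⟩
  have hbot : f φ = ⊥ := by
    obtain ⟨a, ha, hfa⟩ := hsurj (Set.mem_univ ⊥)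
    have h1 := hinf φ hφ a ha
    rwa [inf_eq_left.2 ha.1, hfa, inf_bot_eq] at h1
  rcases hle.eq_or_lt with heq | hlt
  · obtain ⟨a, ha, hfa⟩ := hsurj (Set.mem_univ ⊤)
    have haφ : a = φ := le_antisymm (heq ▸ ha.2) ha.1
    rw [haφ, hbot] at hfa
    exact Lindenbaum.bot_ne_top_nat hfa
  · obtain ⟨b, hφb, hbψ, hfin⟩ := Lindenbaum.exists_finite_Icc φ ψ hlt
    have hb : b ∈ Set.Icc φ ψ := ⟨hφb.le, hbψ⟩
    have hfb : f b ≠ ⊥ := fun h => hφb.ne (hinj hφ hb (hbot.trans h.symm))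
    have hsub : {y | y ≠ ⊥ ∧ y ≤ f b} ⊆ f '' Set.Icc φ b := by
      rintro y ⟨-, hy⟩
      obtain ⟨a, ha, rfl⟩ := hsurj (Set.mem_univ y)
      have hab : a ⊓ b ∈ Set.Icc φ ψ := ⟨le_inf ha.1 hb.1, inf_le_left.trans ha.2⟩
      have heq : a ⊓ b = a := hinj hab ha (by rw [hinf a ha b hb, inf_eq_left.2 hy])
      exact ⟨a, ⟨ha.1, inf_eq_left.1 heq⟩, rfl⟩
    obtain ⟨m, hm⟩ := ((hfin.image f).subset hsub).exists_minimal ⟨f b, hfb, le_rfl⟩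
    obtain ⟨σ, hσ, hσm⟩ := Lindenbaum.exists_between_bot m hm.prop.1
    exact hσm.not_ge (hm.le_of_le ⟨hσ, hσm.le.trans hm.prop.2⟩ hσm.le)
end

section
/- Every countable partial order can be order-embedded into H_2 (and therefore into H_n for any n ≥ 2): for every countable partially ordered set (P, ≤) there is a map f : P → H_2 such that for all p, q ∈ P, p ≤ q iff f(p) ≤ f(q). -/
namespace OrderEmbedding

/-! ### Finite disjunctions and conjunctions -/

/-- The disjunction of a list of formulas. -/
def bigOr {V : Type} : List (PropForm V) → PropForm V
  | [] => .bot
  | φ :: l => .or φ (bigOr l)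

/-- The conjunction of a list of formulas. -/
def bigAnd {V : Type} : List (PropForm V) → PropForm V
  | [] => .top
  | φ :: l => .and φ (bigAnd l)

theorem or_entails {V : Type} {cl : Prop} {φ ψ χ : PropForm V}
    (h1 : Entails cl φ χ) (h2 : Entails cl ψ χ) : Entails cl (.or φ ψ) χ :=
  Prov.orE (Prov.ax rfl)
    (h1.mono (Set.singleton_subset_iff.mpr (Set.mem_insert _ _)))
    (h2.mono (Set.singleton_subset_iff.mpr (Set.mem_insert _ _)))

theorem entails_or_left {V : Type} {cl : Prop} (φ ψ : PropForm V) :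
    Entails cl φ (.or φ ψ) :=
  Prov.orI1 (Prov.ax rfl)

theorem entails_or_right {V : Type} {cl : Prop} (φ ψ : PropForm V) :
    Entails cl ψ (.or φ ψ) :=
  Prov.orI2 (Prov.ax rfl)

theorem and_entails_left {V : Type} {cl : Prop} (φ ψ : PropForm V) :
    Entails cl (.and φ ψ) φ :=
  Prov.andE1 (Prov.ax rfl)

theorem and_entails_right {V : Type} {cl : Prop} (φ ψ : PropForm V) :
    Entails cl (.and φ ψ) ψ :=
  Prov.andE2 (Prov.ax rfl)

theorem bigOr_entails {V : Type} {cl : Prop} {ψ : PropForm V} :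
    ∀ {l : List (PropForm V)}, (∀ φ ∈ l, Entails cl φ ψ) → Entails cl (bigOr l) ψ
  | [], _ => Prov.botE (Prov.ax rfl)
  | φ :: l, h => or_entails (h φ (by simp)) (bigOr_entails fun χ hχ => h χ (by simp [hχ]))

theorem entails_bigOr {V : Type} {cl : Prop} {φ : PropForm V} :
    ∀ {l : List (PropForm V)}, φ ∈ l → Entails cl φ (bigOr l)
  | ψ :: l, h => by
    rcases List.mem_cons.mp h with rfl | h
    · exact entails_or_left _ _
    · exact (entails_bigOr h).trans' (entails_or_right _ _)

theorem bigAnd_entails {V : Type} {cl : Prop} {φ : PropForm V} :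
    ∀ {l : List (PropForm V)}, φ ∈ l → Entails cl (bigAnd l) φ
  | ψ :: l, h => by
    rcases List.mem_cons.mp h with rfl | h
    · exact and_entails_left _ _
    · exact (and_entails_right _ _).trans' (bigAnd_entails h)

/-! ### Kripke semantics -/

/-- Forcing in the Kripke model with accessibility relation `R` and valuation `v`. -/
def Forces {V W : Type} (R : W → W → Prop) (v : V → W → Prop) : PropForm V → W → Prop
  | .var u, w => v u w
  | .bot, _ => False
  | .top, _ => True
  | .and φ ψ, w => Forces R v φ w ∧ Forces R v ψ w
  | .or φ ψ, w => Forces R v φ w ∨ Forces R v ψ w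
  | .imp φ ψ, w => ∀ w', R w w' → Forces R v φ w' → Forces R v ψ w'

section Kripke

variable {V W : Type} {R : W → W → Prop} {v : V → W → Prop}

theorem forces_mono (htrans : ∀ a b c, R a b → R b c → R a c)
    (hv : ∀ u a b, R a b → v u a → v u b) (φ : PropForm V) :
    ∀ {a b : W}, R a b → Forces R v φ a → Forces R v φ b := by
  induction φ with
  | var u => intro a b hab h; exact hv u a b hab h
  | bot => intro a b _ h; exact h
  | top => intro a b _ h; exact h
  | and φ ψ ih1 ih2 => intro a b hab h; exact ⟨ih1 hab h.1, ih2 hab h.2⟩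
  | or φ ψ ih1 ih2 => intro a b hab h; exact h.imp (ih1 hab) (ih2 hab)
  | imp φ ψ _ _ => intro a b hab h c hbc; exact h c (htrans a b c hab hbc)

theorem soundness (hrefl : ∀ a, R a a) (htrans : ∀ a b c, R a b → R b c → R a c)
    (hv : ∀ u a b, R a b → v u a → v u b) {Γ : Set (PropForm V)} {φ : PropForm V}
    (h : Prov False Γ φ) :
    ∀ w, (∀ ψ ∈ Γ, Forces R v ψ w) → Forces R v φ w := by
  induction h with
  | ax hmem => intro w hw; exact hw _ hmem
  | topI => intro w _; trivial
  | botE _ ih => intro w hw; exact (ih w hw).elim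
  | andI _ _ ih1 ih2 => intro w hw; exact ⟨ih1 w hw, ih2 w hw⟩
  | andE1 _ ih => intro w hw; exact (ih w hw).1
  | andE2 _ ih => intro w hw; exact (ih w hw).2
  | orI1 _ ih => intro w hw; exact Or.inl (ih w hw)
  | orI2 _ ih => intro w hw; exact Or.inr (ih w hw)
  | orE _ _ _ ih ih1 ih2 =>
    intro w hw
    rcases ih w hw with h | h
    · exact ih1 w (Set.forall_mem_insert.mpr ⟨h, hw⟩)
    · exact ih2 w (Set.forall_mem_insert.mpr ⟨h, hw⟩)
  | impI _ ih =>
    intro w hw w' hww' h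
    exact ih w' (Set.forall_mem_insert.mpr
      ⟨h, fun ψ hψ => forces_mono htrans hv ψ hww' (hw ψ hψ)⟩)
  | impE _ _ ih1 ih2 => intro w hw; exact ih1 w hw w (hrefl w) (ih2 w hw)
  | em hcl => exact hcl.elim

theorem forces_bigOr {w : W} :
    ∀ {l : List (PropForm V)}, Forces R v (bigOr l) w ↔ ∃ φ ∈ l, Forces R v φ w
  | [] => by simp [bigOr, Forces]
  | φ :: l => by simp [bigOr, Forces, forces_bigOr (l := l)]

theorem forces_bigAnd {w : W} :
    ∀ {l : List (PropForm V)}, Forces R v (bigAnd l) w ↔ ∀ φ ∈ l, Forces R v φ w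
  | [] => by simp [bigAnd, Forces]
  | φ :: l => by simp [bigAnd, Forces, forces_bigAnd (l := l)]

end Kripke

/-! ### Realizing an order by lattice combinations of given formulas -/

open Classical in
/-- The formula `⋁ {F m | m < n, r m n} ∨ (χ n ∧ ⋀ {F m | m < n, r n m})` attached to `n`, where `F`
is the sequence being defined. The indices outside the two ranges contribute `⊥` resp. `⊤`. -/
noncomputable def orderForm {V : Type} (r : ℕ → ℕ → Prop) (χ : ℕ → PropForm V) (n : ℕ) :
    PropForm V :=
  .or (bigOr ((List.finRange n).map fun i => if r i.1 n then orderForm r χ i.1 else .bot))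
    (.and (χ n)
      (bigAnd ((List.finRange n).map fun i => if r n i.1 then orderForm r χ i.1 else .top)))
termination_by n
decreasing_by all_goals exact i.2

section OrderForm

variable {V : Type} {r : ℕ → ℕ → Prop} {χ : ℕ → PropForm V}

theorem entails_orderForm_of_lt {cl : Prop} {m n : ℕ} (hmn : m < n) (h : r m n) :
    Entails cl (orderForm r χ m) (orderForm r χ n) := by
  rw [orderForm.eq_def r χ n]
  refine Entails.trans' (entails_bigOr ?_) (entails_or_left _ _)
  exact List.mem_map.mpr ⟨⟨m, hmn⟩, List.mem_finRange _, by simp [h]⟩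

theorem orderForm_entails {cl : Prop} (htrans : ∀ a b c, r a b → r b c → r a c) :
    ∀ {m n : ℕ}, r m n → Entails cl (orderForm r χ m) (orderForm r χ n) := by
  suffices H : ∀ N m n : ℕ, m + n = N → r m n →
      Entails cl (orderForm r χ m) (orderForm r χ n) from fun {m n} h => H _ m n rfl h
  intro N
  induction N using Nat.strong_induction_on with
  | _ N ih =>
    intro m n hN h
    rcases lt_trichotomy m n with hmn | rfl | hmn
    · exact entails_orderForm_of_lt hmn h
    · exact Entails.refl _
    · rw [orderForm.eq_def r χ m]
      refine or_entails (bigOr_entails ?_) ((and_entails_right _ _).trans' (bigAnd_entails ?_))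
      · intro φ hφ
        obtain ⟨⟨k, hk⟩, -, rfl⟩ := List.mem_map.mp hφ
        by_cases hkm : r k m
        · simpa [hkm] using ih (k + n) (by omega) k n rfl (htrans _ _ _ hkm h)
        · simp only [hkm, if_false]
          exact Prov.botE (Prov.ax rfl)
      · exact List.mem_map.mpr ⟨⟨n, hmn⟩, List.mem_finRange _, by simp [h]⟩

/-- At a world where the `χ n` cut out the principal filter of `a`, so do the `orderForm r χ n`. -/
theorem forces_orderForm {W : Type} {R : W → W → Prop} {v : V → W → Prop} {w : W} {a : ℕ}
    (htrans : ∀ a b c, r a b → r b c → r a c) (hχ : ∀ n, Forces R v (χ n) w ↔ r a n) (n : ℕ) :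
    Forces R v (orderForm r χ n) w ↔ r a n := by
  induction n using Nat.strong_induction_on with
  | _ n ih =>
    rw [orderForm.eq_def]
    simp only [Forces, forces_bigOr, forces_bigAnd, List.mem_map, List.mem_finRange, true_and,
      hχ]
    constructor
    · rintro (⟨_, ⟨⟨m, hm⟩, rfl⟩, h⟩ | h)
      · by_cases hmn : r m n
        · simp only [hmn, if_true] at h
          exact htrans _ _ _ ((ih m hm).mp h) hmn
        · simp [hmn, Forces] at h
      · exact h.1
    · intro h
      refine Or.inr ⟨h, ?_⟩
      rintro _ ⟨⟨m, hm⟩, rfl⟩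
      by_cases hnm : r n m
      · simpa [hnm] using (ih m hm).mpr (htrans _ _ _ h hnm)
      · simp [hnm, Forces]

end OrderForm

/-! ### The Rieger–Nishimura ladder with twins -/

/-- The pair of one-variable formulas which on the Rieger–Nishimura ladder define the up-sets
`{0, …, n}` and `{0, …, n - 1} ∪ {n + 1}`, respectively. -/
def rungs {V : Type} (x : V) : ℕ → PropForm V × PropForm V
  | 0 => (.var x, .imp (.var x) .bot)
  | n + 1 => (.or (rungs x n).1 (rungs x n).2, .imp (rungs x n).2 (rungs x n).1)

/-- The formula defining `{0, …, n}` on the ladder. -/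
abbrev rungA {V : Type} (x : V) (n : ℕ) : PropForm V := (rungs x n).1

/-- The formula failing at the twin of `n + 1`, and at no other twin and at no ladder point. -/
def sepForm {V : Type} (x y : V) (n : ℕ) : PropForm V :=
  .imp (rungA x (n + 1)) (.or (rungA x n) (.var y))

/-- The worlds of the model: the points of the ladder, a twin of each of them, and a root. -/
inductive World : Type
  | ladder : ℕ → World
  | twin : ℕ → World
  | root : World

/-- The accessibility relation. Ladder points and twins see the ladder as in the Rieger–Nishimura
frame; the root sees the whole ladder and the twins of `n + 1` for `n ∉ S`. -/
def Acc (S : Set ℕ) : World → World → Prop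
  | .ladder m, .ladder k => k = m ∨ k + 2 ≤ m
  | .ladder _, _ => False
  | .twin m, .ladder k => k = m ∨ k + 2 ≤ m
  | .twin m, .twin k => k = m
  | .twin _, .root => False
  | .root, .ladder _ => True
  | .root, .twin k => ∃ n, n ∉ S ∧ k = n + 1
  | .root, .root => True

/-- The valuation: `x` holds at the rung `0` and its twin, `y` holds on the ladder. -/
def val {V : Type} (x y : V) (u : V) : World → Prop
  | .ladder k => (u = x ∧ k = 0) ∨ u = y
  | .twin k => u = x ∧ k = 0
  | .root => False

theorem acc_refl (S : Set ℕ) : ∀ a, Acc S a a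
  | .ladder _ => Or.inl rfl
  | .twin _ => rfl
  | .root => trivial

theorem acc_trans (S : Set ℕ) (a b c : World) (hab : Acc S a b) (hbc : Acc S b c) :
    Acc S a c := by
  rcases a with a | a | _ <;> rcases b with b | b | _ <;> rcases c with c | c | _ <;>
    simp only [Acc] at hab hbc ⊢ <;> first | omega | (subst hbc; exact hab)

theorem val_mono {V : Type} (S : Set ℕ) (x y u : V) (a b : World) (hab : Acc S a b)
    (h : val x y u a) : val x y u b := by
  rcases a with a | a | _ <;> rcases b with b | b | _ <;>
    simp only [Acc, val] at hab h ⊢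
  · rcases h with ⟨h, h0⟩ | h
    · exact Or.inl ⟨h, by omega⟩
    · exact Or.inr h
  · exact Or.inl ⟨h.1, by omega⟩
  · exact ⟨h.1, by omega⟩

theorem forces_rungs {V : Type} (S : Set ℕ) {x y : V} (hxy : x ≠ y) (n : ℕ) :
    (∀ k, (Forces (Acc S) (val x y) (rungs x n).1 (.ladder k) ↔ k ≤ n) ∧
      (Forces (Acc S) (val x y) (rungs x n).2 (.ladder k) ↔ k + 1 ≤ n ∨ k = n + 1)) ∧
    (∀ k, (Forces (Acc S) (val x y) (rungs x n).1 (.twin k) ↔ k ≤ n) ∧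
      (Forces (Acc S) (val x y) (rungs x n).2 (.twin k) ↔ k + 1 ≤ n ∨ k = n + 1)) := by
  induction n with
  | zero =>
    refine ⟨fun k => ⟨by simp [rungs, Forces, val, hxy], ?_⟩,
      fun k => ⟨by simp [rungs, Forces, val], ?_⟩⟩
    all_goals
      simp only [rungs, Forces]
      constructor
      · intro h
        -- every index other than `1` sees the rung `0`, where `x` holds
        have := h (.ladder 0)
        simp only [Acc, val, true_and, true_or, imp_false, not_true_eq_false] at this
        omega
      · rintro hk (j | j | _) hj hx <;> simp only [Acc, val, hxy, or_false, true_and] at hj hx <;>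
          omega
  | succ n ih =>
    obtain ⟨ihL, ihT⟩ := ih
    refine ⟨fun k => ⟨?_, ?_⟩, fun k => ⟨?_, ?_⟩⟩
    · simp only [rungs, Forces, ihL]; omega
    · simp only [rungs, Forces]
      constructor
      · intro h
        -- a point violating the bound sees the rung `n + 1`, where the implication fails
        by_contra hk
        have h' := h (.ladder (n + 1)) (by simp only [Acc]; omega) ((ihL _).2.mpr (by omega))
        rw [(ihL _).1] at h'
        omega
      · rintro hk (j | j | _) hj h <;> simp only [Acc, ihL] at hj h ⊢
        omega
    · simp only [rungs, Forces, ihT]; omega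
    · simp only [rungs, Forces]
      constructor
      · intro h
        by_contra hk
        have h' := h (.ladder (n + 1)) (by simp only [Acc]; omega) ((ihL _).2.mpr (by omega))
        rw [(ihL _).1] at h'
        omega
      · rintro hk (j | j | _) hj h <;> simp only [Acc, ihL, ihT] at hj h ⊢ <;> omega

theorem not_forces_root_rungA {V : Type} (S : Set ℕ) {x y : V} (hxy : x ≠ y) (n : ℕ) :
    ¬ Forces (Acc S) (val x y) (rungA x n) .root := by
  intro h
  have h' := forces_mono (acc_trans S) (val_mono S x y) _
    (show Acc S .root (.ladder (n + 1)) from trivial) h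
  rw [((forces_rungs S hxy n).1 (n + 1)).1] at h'
  omega

/-- The formulas `sepForm x y n` are independent: any set of indices is realized at a root. -/
theorem forces_root_sepForm {V : Type} (S : Set ℕ) {x y : V} (hxy : x ≠ y) (n : ℕ) :
    Forces (Acc S) (val x y) (sepForm x y n) .root ↔ n ∈ S := by
  constructor
  · intro h
    by_contra hn
    have h' := h (.twin (n + 1)) ⟨n, hn, rfl⟩ (((forces_rungs S hxy (n + 1)).2 _).1.mpr le_rfl)
    rcases h' with h' | h'
    · have := ((forces_rungs S hxy n).2 _).1.mp h'
      omega
    · exact hxy h'.1.symm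
  · rintro hn (k | k | _) hk h
    · exact Or.inr (Or.inr rfl)
    · obtain ⟨m, hm, rfl⟩ := hk
      have h1 := ((forces_rungs S hxy (n + 1)).2 _).1.mp h
      have hne : m ≠ n := fun e => hm (e ▸ hn)
      exact Or.inl (((forces_rungs S hxy n).2 _).1.mpr (by omega))
    · exact (not_forces_root_rungA S hxy _ h).elim

/-! ### The embedding -/

theorem exists_embedding (P : Type) [Countable P] [PartialOrder P] {V : Type} {x y : V}
    (hxy : x ≠ y) :
    ∃ f : P → Lindenbaum False V, ∀ p q : P, p ≤ q ↔ Lindenbaum.le (f p) (f q) := by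
  obtain ⟨e, he⟩ := exists_injective_nat P
  let r : ℕ → ℕ → Prop := fun m n => ∃ p q : P, e p = m ∧ e q = n ∧ p ≤ q
  have hr : ∀ p q : P, r (e p) (e q) ↔ p ≤ q := by
    intro p q
    constructor
    · rintro ⟨p', q', hp, hq, h⟩
      rwa [← he hp, ← he hq]
    · exact fun h => ⟨p, q, rfl, rfl, h⟩
  have htrans : ∀ a b c, r a b → r b c → r a c := by
    rintro _ _ _ ⟨p, q, rfl, rfl, hpq⟩ ⟨q', s, hq, rfl, hqs⟩
    rw [he hq] at hqs
    exact ⟨p, s, rfl, rfl, hpq.trans hqs⟩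
  refine ⟨fun p => Lindenbaum.mk False (orderForm r (sepForm x y) (e p)), fun p q => ?_⟩
  change p ≤ q ↔ Entails False _ _
  constructor
  · exact fun h => orderForm_entails htrans ((hr p q).mpr h)
  · intro h
    let S : Set ℕ := {n | r (e p) n}
    have key := forces_orderForm (r := r) (a := e p) htrans (forces_root_sepForm S hxy)
    have h' := soundness (acc_refl S) (acc_trans S) (val_mono S x y) h .root (by
      rintro ψ rfl
      exact (key (e p)).mpr ((hr p p).mpr le_rfl))
    exact (hr p q).mp ((key (e q)).mp h')

end OrderEmbedding

/-- Every countable partial order order-embeds into `H_2`, and therefore into `H_n` for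
every `n ≥ 2`. -/
theorem countable_partial_order_embeds (P : Type) [Countable P] [PartialOrder P] :
    (∃ f : P → Lindenbaum False (Fin 2),
      ∀ p q : P, p ≤ q ↔ Lindenbaum.le (f p) (f q)) ∧
    ∀ n : ℕ, 2 ≤ n → ∃ f : P → Lindenbaum False (Fin n),
      ∀ p q : P, p ≤ q ↔ Lindenbaum.le (f p) (f q) := by
  refine ⟨OrderEmbedding.exists_embedding P (x := 0) (y := 1) (by decide), fun n hn => ?_⟩
  exact OrderEmbedding.exists_embedding P (x := (⟨0, by omega⟩ : Fin n)) (y := ⟨1, by omega⟩)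
    (by simp)
end
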